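/- Let N ≥ 1, let Ω ⊆ ℝ^N be a bounded open set, let b > 0, α > 0, λ > 0 be real numbers, and let f, v : ℝ^N → ℝ with v twice continuously differentiable on Ω and the function x ↦ ‖∇v(x)‖² integrable on Ω. Assume v satisfies −Δv(x) = f(x) for all x ∈ Ω, v(x) ≥ 0 for all x ∈ Ω, and v(x) = 0 for all x in the boundary of Ω. Then there exists a real number t > 0 such that the function u = t·v satisfies −(1 + b·(∫_Ω ‖∇u(x)‖² dx)^α)·Δu(x) = λ·f(x) for all x ∈ Ω, u(x) ≥ 0 for all x ∈ Ω, and u(x) = 0 for all x in the boundary of Ω. -/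

import Mathlib

open MeasureTheory

/-- The Laplacian of `u : ℝ^N → ℝ` at `x`: the trace of the second derivative, i.e. the sum
of the pure second partial derivatives along the standard basis directions. -/
noncomputable def laplacian {N : ℕ} (u : EuclideanSpace ℝ (Fin N) → ℝ)
    (x : EuclideanSpace ℝ (Fin N)) : ℝ :=
  ∑ i : Fin N, fderiv ℝ (fun y => fderiv ℝ u y (EuclideanSpace.single i 1)) x
    (EuclideanSpace.single i 1)

/-- Sufficiency direction of Lemma 2.3: if `v` solves `−Δv = f`, `v ≥ 0` in `Ω`, `v = 0` on
`∂Ω`, then there is `t > 0` such that `u = t·v` solves the Kirchhoff-linear problem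
`−(1 + b‖∇u‖₂^{2α})Δu = λf`, `u ≥ 0` in `Ω`, `u = 0` on `∂Ω`. -/
theorem stmt_2 {N : ℕ} (hN : 1 ≤ N) (Ω : Set (EuclideanSpace ℝ (Fin N)))
    (hΩopen : IsOpen Ω) (hΩbdd : Bornology.IsBounded Ω)
    (b α lam : ℝ) (hb : 0 < b) (hα : 0 < α) (hlam : 0 < lam)
    (f v : EuclideanSpace ℝ (Fin N) → ℝ)
    (hv : ContDiffOn ℝ 2 v Ω)
    (hgrad : IntegrableOn (fun x => ‖gradient v x‖ ^ 2) Ω volume)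
    (heq : ∀ x ∈ Ω, -laplacian v x = f x)
    (hnonneg : ∀ x ∈ Ω, 0 ≤ v x)
    (hbdry : ∀ x ∈ frontier Ω, v x = 0) :
    ∃ t : ℝ, 0 < t ∧
      ((∀ x ∈ Ω,
        -((1 + b * (∫ x in Ω, ‖gradient (fun y => t * v y) x‖ ^ 2) ^ α) *
            laplacian (fun y => t * v y) x) = lam * f x) ∧
      (∀ x ∈ Ω, 0 ≤ t * v x) ∧
      (∀ x ∈ frontier Ω, t * v x = 0)) := by
  have hfd : ∀ (t : ℝ) (w : EuclideanSpace ℝ (Fin N) → ℝ) (x : EuclideanSpace ℝ (Fin N)),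
      fderiv ℝ (fun y => t * w y) x = t • fderiv ℝ w x := by
    intro t w x
    have h := fderiv_const_smul_field (𝕜 := ℝ) (f := w) t
    exact congrFun h x
  have hgr : ∀ (t : ℝ) (x : EuclideanSpace ℝ (Fin N)),
      gradient (fun y => t * v y) x = t • gradient v x := by
    intro t x
    simp only [gradient, hfd, map_smulₛₗ]
    simp
  have hlap : ∀ (t : ℝ) (x : EuclideanSpace ℝ (Fin N)),
      laplacian (fun y => t * v y) x = t * laplacian v x := by
    intro t x
    simp only [laplacian, hfd, _root_.smul_apply, smul_eq_mul, Finset.mul_sum]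
  have hint : ∀ t : ℝ, (∫ x in Ω, ‖gradient (fun y => t * v y) x‖ ^ 2)
      = t ^ 2 * ∫ x in Ω, ‖gradient v x‖ ^ 2 := by
    intro t
    simp only [hgr, norm_smul, mul_pow, Real.norm_eq_abs, sq_abs, integral_const_mul]
  have hA : 0 ≤ ∫ x in Ω, ‖gradient v x‖ ^ 2 := integral_nonneg fun x => by positivity
  simp only [hint, hlap]
  generalize (∫ x in Ω, ‖gradient v x‖ ^ 2) = A at hA
  have hcont : ContinuousOn (fun t : ℝ => t * (1 + b * (t ^ 2 * A) ^ α)) (Set.Icc 0 lam) := by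
    apply Continuous.continuousOn
    have : Continuous fun t : ℝ => (t ^ 2 * A) ^ α :=
      Continuous.rpow_const (by fun_prop) fun _ => Or.inr hα.le
    fun_prop
  have hlam' : lam ∈ Set.Icc ((fun t : ℝ => t * (1 + b * (t ^ 2 * A) ^ α)) 0)
      ((fun t : ℝ => t * (1 + b * (t ^ 2 * A) ^ α)) lam) := by
    refine ⟨by simpa using hlam.le, ?_⟩
    have : 0 ≤ b * (lam ^ 2 * A) ^ α := by positivity
    show lam ≤ lam * (1 + b * (lam ^ 2 * A) ^ α)
    nlinarith
  obtain ⟨t, ht, hteq⟩ := intermediate_value_Icc hlam.le hcont hlam'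
  have hteq : t * (1 + b * (t ^ 2 * A) ^ α) = lam := hteq
  have ht0 : 0 < t := by
    rcases ht.1.lt_or_eq with h | h
    · exact h
    · rw [← h] at hteq
      simp at hteq
      linarith
  refine ⟨t, ht0, fun x hx => ?_, fun x hx => mul_nonneg ht0.le (hnonneg x hx),
    fun x hx => by rw [hbdry x hx, mul_zero]⟩
  rw [← heq x hx, ← hteq]
  ring
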